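/- arXiv:2409.16963 — 2 statements merged into one kernel-verified Lean document; each statement's English description precedes it below -/
import Mathlib

section
/- Let β(x) = e^{-x} (the SNE case). Let Y(t) be a solution of the gradient flow of the relative entropy with Σ_{i=1}^n y_i(t) = 0 for all t, and set S(t) = Σ_{i=1}^n |y_i(t)|². Then there exist constants c > 0, C > 0 and C' > 0 (independent of t) such that for every t ≥ 0 with S(t) ≥ C', one has dS/dt (t) ≤ −c S(t) + C. -/
open Filter Topology

/-- The normalizing constant `Z = Σ_{k ≠ ℓ} β(|y_k - y_ℓ|²)`. -/
noncomputable def pairZ {E : Type*} [NormedAddCommGroup E] (β : ℝ → ℝ) {n : ℕ}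
    (Y : Fin n → E) : ℝ :=
  ∑ k : Fin n, ∑ l : Fin n, if k ≠ l then β (‖Y k - Y l‖ ^ 2) else 0

/-- The low-dimensional similarity `q_{ij}(Y) = β(|y_i - y_j|²) / Z(Y)`. -/
noncomputable def qfun {E : Type*} [NormedAddCommGroup E] (β : ℝ → ℝ) {n : ℕ}
    (Y : Fin n → E) (i j : Fin n) : ℝ :=
  β (‖Y i - Y j‖ ^ 2) / pairZ β Y

/-- The derivative `(log β)'` on `[0, ∞)`. -/
noncomputable def lbd (β : ℝ → ℝ) : ℝ → ℝ :=
  fun x => derivWithin (fun y => Real.log (β y)) (Set.Ici 0) x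

/-- `Y : ℝ → Fin n → E` is a solution of the gradient flow of the relative entropy:
`dy_i/dt = 4 Σ_{j ≠ i} (p_{ij} - q_{ij}(Y)) (y_i - y_j) (log β)'(|y_i - y_j|²)` for `t ≥ 0`. -/
def IsGradFlow {E : Type*} [NormedAddCommGroup E] [NormedSpace ℝ E] (β : ℝ → ℝ) {n : ℕ}
    (p : Fin n → Fin n → ℝ) (Y : ℝ → Fin n → E) : Prop :=
  ∀ i : Fin n, ∀ t ∈ Set.Ici (0 : ℝ),
    HasDerivWithinAt (fun u => Y u i)
      (∑ j ∈ Finset.univ.filter (· ≠ i),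
        (4 * (p i j - qfun β (Y t) i j) * lbd β (‖Y t i - Y t j‖ ^ 2)) • (Y t i - Y t j))
      (Set.Ici 0) t

/-- The diameter of the configuration `Y`, i.e. `max_{i,j} |y_i - y_j|`. -/
noncomputable def diamY {E : Type*} [NormedAddCommGroup E] {n : ℕ} (Y : Fin n → E) : ℝ :=
  Metric.diam (Set.range Y)

/-!
Along the flow `dS/dt = 4 Σ_{i ≠ j} (q_{ij} - p_{ij}) |y_i - y_j|²`. Since `p` and `q` both have
total mass `1`, each `|y_i - y_j|²` may be replaced by its excess `|y_i - y_j|² - m` over the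
minimal squared distance `m`. For `β = exp (-·)` one has `q_{ij} ≤ exp (-(|y_i - y_j|² - m))`, so
the repulsive part is bounded because `x e^{-x} ≤ e^{-1}`.

The attractive part is coercive because more than `s + 1` points of `ℝ^s` cannot be almost
equidistant. Quantitatively, an affine relation `Σ w_i y_i = 0`, `Σ w_i = 0` gives
`Σ_{i,j} w_i w_j |y_i - y_j|² = 0`, that is
`m Σ w_i² = Σ_{i ≠ j} w_i w_j (|y_i - y_j|² - m)`, and `|w_i w_j| ≤ ½ Σ w_k²` for `i ≠ j`. Hence the
total excess is at least `2 m`, and therefore at least a fixed fraction of `Σ_{i ≠ j} |y_i - y_j|²`.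
-/

section PairSums

open Finset

variable {ι : Type*} [Fintype ι]

lemma sum_sum_ite_ne_eq_sum_offDiag [DecidableEq ι] {M : Type*} [AddCommMonoid M]
    (f : ι → ι → M) :
    (∑ i, ∑ j, if i ≠ j then f i j else 0) = ∑ e ∈ univ.offDiag, f e.1 e.2 := by
  rw [← Fintype.sum_prod_type' fun i j => if i ≠ j then f i j else 0, ← sum_filter]
  congr 1
  ext e
  simp

lemma sum_offDiag_eq_sum_sum_sub {M : Type*} [AddCommGroup M] (f : ι → ι → M) :
    ∑ e ∈ univ.offDiag, f e.1 e.2 = ∑ i, ∑ j, f i j - ∑ i, f i i := by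
  classical
  simp only [← sum_sum_ite_ne_eq_sum_offDiag, ← sum_sub_distrib]
  refine sum_congr rfl fun i _ => eq_sub_of_add_eq ?_
  rw [← Fintype.sum_ite_eq i (fun j => f i j), ← sum_add_distrib]
  refine sum_congr rfl fun j _ => ?_
  by_cases hij : i = j <;> simp [hij]

variable {E : Type*} [SeminormedAddCommGroup E] [InnerProductSpace ℝ E]

lemma two_mul_sum_inner_sum_smul_sub [DecidableEq ι] {a : ι → ι → ℝ} (ha : ∀ i j, a i j = a j i)
    (Y : ι → E) :
    2 * ∑ i, inner ℝ (Y i) (∑ j with j ≠ i, a i j • (Y i - Y j)) =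
      ∑ e ∈ univ.offDiag, a e.1 e.2 * ‖Y e.1 - Y e.2‖ ^ 2 := by
  have expand : ∑ i, inner ℝ (Y i) (∑ j with j ≠ i, a i j • (Y i - Y j)) =
      ∑ i, ∑ j, a i j * inner ℝ (Y i) (Y i - Y j) := by
    refine sum_congr rfl fun i _ => ?_
    rw [inner_sum, sum_filter]
    refine sum_congr rfl fun j _ => ?_
    by_cases hij : j = i <;> simp [hij, inner_smul_right]
  have swap : ∑ i, ∑ j, a i j * inner ℝ (Y i) (Y i - Y j) =
      ∑ i, ∑ j, a i j * inner ℝ (Y j) (Y j - Y i) := by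
    rw [sum_comm]
    exact sum_congr rfl fun i _ => sum_congr rfl fun j _ => by rw [ha]
  rw [sum_offDiag_eq_sum_sum_sub fun i j => a i j * ‖Y i - Y j‖ ^ 2, expand, two_mul]
  nth_rewrite 2 [swap]
  simp only [← sum_add_distrib, ← mul_add, sub_self, norm_zero, ne_eq, OfNat.ofNat_ne_zero,
    not_false_eq_true, zero_pow, mul_zero, sum_const_zero, sub_zero]
  refine sum_congr rfl fun i _ => sum_congr rfl fun j _ => congrArg _ ?_
  rw [← real_inner_self_eq_norm_sq, ← neg_sub (Y i) (Y j), inner_neg_right, ← sub_eq_add_neg,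
    ← inner_sub_left]

lemma sum_offDiag_norm_sub_sq (Y : ι → E) :
    ∑ e ∈ univ.offDiag, ‖Y e.1 - Y e.2‖ ^ 2 =
      2 * Fintype.card ι * ∑ i, ‖Y i - (Fintype.card ι : ℝ)⁻¹ • ∑ j, Y j‖ ^ 2 := by
  set c := (Fintype.card ι : ℝ)⁻¹ • ∑ j, Y j with hc
  have centered : ∑ i, (Y i - c) = 0 := by
    cases isEmpty_or_nonempty ι
    · exact sum_of_isEmpty _
    · rw [sum_sub_distrib, sum_const, card_univ, ← Nat.cast_smul_eq_nsmul ℝ, hc, smul_smul,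
        mul_inv_cancel₀ (Nat.cast_ne_zero.2 Fintype.card_ne_zero), one_smul, sub_self]
  have expand (i j : ι) : ‖Y i - Y j‖ ^ 2 =
      ‖Y i - c‖ ^ 2 - 2 * inner ℝ (Y i - c) (Y j - c) + ‖Y j - c‖ ^ 2 := by
    rw [← sub_sub_sub_cancel_right (Y i) (Y j) c, norm_sub_sq_real]
  rw [sum_offDiag_eq_sum_sum_sub fun i j => ‖Y i - Y j‖ ^ 2]
  simp only [sub_self, norm_zero, ne_eq, OfNat.ofNat_ne_zero, not_false_eq_true, zero_pow,
    sum_const_zero, sub_zero]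
  simp only [expand, sum_add_distrib, sum_sub_distrib, ← mul_sum, ← inner_sum, centered,
    inner_zero_right, mul_zero, sum_const, card_univ, nsmul_eq_mul]
  ring

end PairSums

section AffineDependence

open Finset

lemma not_affineIndependent_of_finrank_add_one_lt_card {k V P ι : Type*} [DivisionRing k]
    [AddCommGroup V] [Module k V] [AddTorsor V P] [Fintype ι] [FiniteDimensional k V]
    (h : Module.finrank k V + 1 < Fintype.card ι) (Y : ι → P) : ¬AffineIndependent k Y :=
  fun hY => (hY.card_le_finrank_succ.trans
    (Nat.succ_le_succ (Submodule.finrank_le _))).not_gt h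

variable {ι V P : Type*} [Fintype ι] [NormedAddCommGroup V] [InnerProductSpace ℝ V]
  [MetricSpace P] [NormedAddTorsor V P]

lemma sum_offDiag_mul_mul_dist_sq_sub {w : ι → ℝ} {Y : ι → P} (hw : ∑ i, w i = 0)
    (hwY : univ.weightedVSub Y w = (0 : V)) (m : ℝ) :
    ∑ e ∈ univ.offDiag, w e.1 * w e.2 * (dist (Y e.1) (Y e.2) ^ 2 - m) = m * ∑ i, w i ^ 2 := by
  have quadratic : ∑ i, ∑ j, w i * w j * dist (Y i) (Y j) ^ 2 = 0 := by
    have := EuclideanGeometry.inner_weightedVSub Y hw Y hw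
    rw [hwY, inner_zero_left] at this
    simp only [pow_two]
    linarith
  rw [sum_offDiag_eq_sum_sum_sub fun i j => w i * w j * (dist (Y i) (Y j) ^ 2 - m)]
  simp only [mul_sub, sum_sub_distrib, quadratic, ← sum_mul, ← mul_sum, hw, dist_self]
  simp [← pow_two, mul_comm]

lemma two_mul_le_sum_offDiag_dist_sq_sub {Y : ι → P} (hY : ¬AffineIndependent ℝ Y) {m : ℝ}
    (hm : ∀ i j, i ≠ j → m ≤ dist (Y i) (Y j) ^ 2) :
    2 * m ≤ ∑ e ∈ univ.offDiag, (dist (Y e.1) (Y e.2) ^ 2 - m) := by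
  rw [affineIndependent_iff_of_fintype] at hY
  push Not at hY
  obtain ⟨w, hw, hwY, k, hk⟩ := hY
  have weight_pos : 0 < ∑ i, w i ^ 2 :=
    sum_pos' (fun i _ => sq_nonneg (w i)) ⟨k, mem_univ k, by positivity⟩
  have mul_le_half {i j : ι} (hij : i ≠ j) : w i * w j ≤ (∑ k, w k ^ 2) / 2 := by
    have pair_le : w i ^ 2 + w j ^ 2 ≤ ∑ k, w k ^ 2 := by
      classical
      rw [← sum_pair (f := fun k => w k ^ 2) hij]
      exact sum_le_univ_sum_of_nonneg fun k => sq_nonneg (w k)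
    linarith [two_mul_le_add_sq (w i) (w j)]
  refine le_of_mul_le_mul_left ?_ (half_pos weight_pos)
  calc (∑ k, w k ^ 2) / 2 * (2 * m)
      = ∑ e ∈ univ.offDiag, w e.1 * w e.2 * (dist (Y e.1) (Y e.2) ^ 2 - m) := by
        rw [sum_offDiag_mul_mul_dist_sq_sub hw hwY]
        ring
    _ ≤ ∑ e ∈ univ.offDiag, (∑ k, w k ^ 2) / 2 * (dist (Y e.1) (Y e.2) ^ 2 - m) := by
        refine sum_le_sum fun e he => ?_
        have hne : e.1 ≠ e.2 := (mem_offDiag.1 he).2.2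
        exact mul_le_mul_of_nonneg_right (mul_le_half hne) (sub_nonneg.2 (hm _ _ hne))
    _ = (∑ k, w k ^ 2) / 2 * ∑ e ∈ univ.offDiag, (dist (Y e.1) (Y e.2) ^ 2 - m) :=
        (mul_sum ..).symm

lemma sum_offDiag_dist_sq_le {Y : ι → P} (hY : ¬AffineIndependent ℝ Y) {m : ℝ}
    (hm : ∀ i j, i ≠ j → m ≤ dist (Y i) (Y j) ^ 2) :
    ∑ e ∈ univ.offDiag, dist (Y e.1) (Y e.2) ^ 2 ≤
      (1 + #(univ : Finset ι).offDiag / 2) *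
        ∑ e ∈ univ.offDiag, (dist (Y e.1) (Y e.2) ^ 2 - m) := by
  have excess := two_mul_le_sum_offDiag_dist_sq_sub hY hm
  simp only [sum_sub_distrib, sum_const, nsmul_eq_mul] at excess ⊢
  have := mul_le_mul_of_nonneg_left excess (Nat.cast_nonneg (α := ℝ) #(univ : Finset ι).offDiag)
  linarith

end AffineDependence

section Similarities

open Finset

variable {n : ℕ}

lemma lbd_exp_neg {x : ℝ} (hx : 0 ≤ x) : lbd (fun x => Real.exp (-x)) x = -1 := by
  simp only [lbd, Real.log_exp]
  exact (hasDerivAt_neg x).hasDerivWithinAt.derivWithin (uniqueDiffOn_Ici 0 x hx)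

variable {E : Type*} [NormedAddCommGroup E] {β : ℝ → ℝ}

lemma qfun_comm (β : ℝ → ℝ) (Y : Fin n → E) (i j : Fin n) : qfun β Y i j = qfun β Y j i := by
  rw [qfun, qfun, norm_sub_rev]

lemma pairZ_eq_sum_offDiag (β : ℝ → ℝ) (Y : Fin n → E) :
    pairZ β Y = ∑ e ∈ univ.offDiag, β (‖Y e.1 - Y e.2‖ ^ 2) :=
  sum_sum_ite_ne_eq_sum_offDiag fun i j => β (‖Y i - Y j‖ ^ 2)

lemma le_pairZ (hβ : ∀ x, 0 ≤ x → 0 ≤ β x) (Y : Fin n → E) {k l : Fin n} (hkl : k ≠ l) :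
    β (‖Y k - Y l‖ ^ 2) ≤ pairZ β Y := by
  rw [pairZ_eq_sum_offDiag]
  exact single_le_sum (f := fun e : Fin n × Fin n => β (‖Y e.1 - Y e.2‖ ^ 2))
    (fun e _ => hβ _ (sq_nonneg _)) (a := (k, l)) (by simpa using hkl)

lemma sum_offDiag_qfun {Y : Fin n → E} (hZ : pairZ β Y ≠ 0) :
    ∑ e ∈ univ.offDiag, qfun β Y e.1 e.2 = 1 := by
  simp only [qfun]
  rw [← sum_div, ← pairZ_eq_sum_offDiag, div_self hZ]

lemma qfun_exp_neg_le (Y : Fin n → E) {k l : Fin n} (hkl : k ≠ l) (i j : Fin n) :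
    qfun (fun x => Real.exp (-x)) Y i j ≤
      Real.exp (-(‖Y i - Y j‖ ^ 2 - ‖Y k - Y l‖ ^ 2)) := by
  have hZ := le_pairZ (β := fun x => Real.exp (-x)) (fun x _ => (Real.exp_pos _).le) Y hkl
  calc qfun (fun x => Real.exp (-x)) Y i j
      ≤ Real.exp (-‖Y i - Y j‖ ^ 2) / Real.exp (-‖Y k - Y l‖ ^ 2) :=
        div_le_div_of_nonneg_left (Real.exp_pos _).le (Real.exp_pos _) hZ
    _ = Real.exp (-(‖Y i - Y j‖ ^ 2 - ‖Y k - Y l‖ ^ 2)) := by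
        rw [← Real.exp_sub]
        congr 1
        ring

lemma qfun_exp_neg_mul_sub_le {Y : Fin n → E} {i j k l : Fin n} (hkl : k ≠ l)
    (hle : ‖Y k - Y l‖ ^ 2 ≤ ‖Y i - Y j‖ ^ 2) :
    qfun (fun x => Real.exp (-x)) Y i j * (‖Y i - Y j‖ ^ 2 - ‖Y k - Y l‖ ^ 2) ≤
      Real.exp (-1) := by
  refine (mul_le_mul_of_nonneg_right (qfun_exp_neg_le Y hkl i j) (sub_nonneg.2 hle)).trans ?_
  rw [mul_comm]
  exact Real.mul_exp_neg_le_exp_neg_one _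

end Similarities

section GradientFlow

open Finset

variable {E : Type*} [NormedAddCommGroup E] [InnerProductSpace ℝ E] {n : ℕ}
  {p : Fin n → Fin n → ℝ}

lemma IsGradFlow.hasDerivWithinAt_sum_norm_sq {β : ℝ → ℝ} {Y : ℝ → Fin n → E}
    (hflow : IsGradFlow β p Y) (hsymm : ∀ i j, p i j = p j i) {t : ℝ} (ht : 0 ≤ t) :
    HasDerivWithinAt (fun u => ∑ i, ‖Y u i‖ ^ 2)
      (∑ e ∈ univ.offDiag, 4 * (p e.1 e.2 - qfun β (Y t) e.1 e.2) *
        lbd β (‖Y t e.1 - Y t e.2‖ ^ 2) * ‖Y t e.1 - Y t e.2‖ ^ 2) (Set.Ici 0) t := by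
  rw [← two_mul_sum_inner_sum_smul_sub
    (a := fun i j => 4 * (p i j - qfun β (Y t) i j) * lbd β (‖Y t i - Y t j‖ ^ 2))
    (fun i j => by simp only [hsymm i j, qfun_comm β (Y t) i j, norm_sub_rev (Y t i)]), mul_sum]
  exact HasDerivWithinAt.fun_sum fun i _ => (hflow i t ht).norm_sq

lemma IsGradFlow.derivWithin_sum_norm_sq_exp_neg {Y : ℝ → Fin n → E}
    (hflow : IsGradFlow (fun x => Real.exp (-x)) p Y) (hsymm : ∀ i j, p i j = p j i) {t : ℝ}
    (ht : 0 ≤ t) :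
    derivWithin (fun u => ∑ i, ‖Y u i‖ ^ 2) (Set.Ici 0) t =
      4 * ∑ e ∈ univ.offDiag, (qfun (fun x => Real.exp (-x)) (Y t) e.1 e.2 - p e.1 e.2) *
        ‖Y t e.1 - Y t e.2‖ ^ 2 := by
  rw [(hflow.hasDerivWithinAt_sum_norm_sq hsymm ht).derivWithin (uniqueDiffOn_Ici 0 t ht), mul_sum]
  refine sum_congr rfl fun e _ => ?_
  rw [lbd_exp_neg (sq_nonneg _)]
  ring

lemma sum_offDiag_qfun_exp_neg_sub_mul_le (hpsum : ∑ e ∈ univ.offDiag, p e.1 e.2 = 1) {ε : ℝ}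
    (hε : 0 ≤ ε) (hεp : ∀ i j, i ≠ j → ε ≤ p i j) {Y : Fin n → E}
    (hY : ¬AffineIndependent ℝ Y) :
    ∑ e ∈ univ.offDiag, (qfun (fun x => Real.exp (-x)) Y e.1 e.2 - p e.1 e.2) *
        ‖Y e.1 - Y e.2‖ ^ 2 ≤
      #(univ : Finset (Fin n)).offDiag * Real.exp (-1) -
        ε * ((∑ e ∈ univ.offDiag, ‖Y e.1 - Y e.2‖ ^ 2) /
          (1 + #(univ : Finset (Fin n)).offDiag / 2)) := by
  have pairs_nonempty : (univ : Finset (Fin n)).offDiag.Nonempty :=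
    nonempty_of_sum_ne_zero (hpsum.trans_ne one_ne_zero)
  obtain ⟨⟨k, l⟩, hkl, hmin⟩ := exists_min_image _ (fun e => ‖Y e.1 - Y e.2‖ ^ 2) pairs_nonempty
  have hkl : k ≠ l := (mem_offDiag.1 hkl).2.2
  set m := ‖Y k - Y l‖ ^ 2
  set q := qfun (fun x => Real.exp (-x)) Y
  have hqsum : ∑ e ∈ univ.offDiag, q e.1 e.2 = 1 :=
    sum_offDiag_qfun ((Real.exp_pos _).trans_le
      (le_pairZ (fun x _ => (Real.exp_pos (-x)).le) Y hkl)).ne'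
  have excess : (∑ e ∈ univ.offDiag, ‖Y e.1 - Y e.2‖ ^ 2) /
      (1 + #(univ : Finset (Fin n)).offDiag / 2) ≤
        ∑ e ∈ univ.offDiag, (‖Y e.1 - Y e.2‖ ^ 2 - m) := by
    rw [div_le_iff₀' (by positivity)]
    simp only [← dist_eq_norm]
    exact sum_offDiag_dist_sq_le hY fun i j hij => by
      simpa only [dist_eq_norm] using hmin (i, j) (by simpa using hij)
  calc ∑ e ∈ univ.offDiag, (q e.1 e.2 - p e.1 e.2) * ‖Y e.1 - Y e.2‖ ^ 2
      = ∑ e ∈ univ.offDiag, (q e.1 e.2 - p e.1 e.2) * (‖Y e.1 - Y e.2‖ ^ 2 - m) := by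
        simp only [mul_sub, sum_sub_distrib, ← sum_mul, hqsum, hpsum, sub_self, zero_mul, sub_zero]
    _ ≤ ∑ e ∈ univ.offDiag, (Real.exp (-1) - ε * (‖Y e.1 - Y e.2‖ ^ 2 - m)) := by
        refine sum_le_sum fun e he => ?_
        rw [sub_mul]
        exact sub_le_sub (qfun_exp_neg_mul_sub_le hkl (hmin e he))
          (mul_le_mul_of_nonneg_right (hεp _ _ (mem_offDiag.1 he).2.2) (sub_nonneg.2 (hmin e he)))
    _ = #(univ : Finset (Fin n)).offDiag * Real.exp (-1) -
          ε * ∑ e ∈ univ.offDiag, (‖Y e.1 - Y e.2‖ ^ 2 - m) := by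
        rw [sum_sub_distrib, sum_const, nsmul_eq_mul, mul_sum]
    _ ≤ _ := sub_le_sub_left (mul_le_mul_of_nonneg_left excess hε) _

theorem dSdt_bound_sne_general (hsymm : ∀ i j, p i j = p j i)
    (hppos : ∀ i j, i ≠ j → 0 < p i j)
    (hpsum : (∑ i, ∑ j, if i ≠ j then p i j else (0 : ℝ)) = 1) :
    ∃ c C : ℝ, 0 < c ∧ 0 < C ∧
      ∀ Y : ℝ → Fin n → E, IsGradFlow (fun x => Real.exp (-x)) p Y →
        ∀ t : ℝ, 0 ≤ t → ¬AffineIndependent ℝ (Y t) →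
          derivWithin (fun u => ∑ i, ‖Y u i‖ ^ 2) (Set.Ici 0) t
            ≤ -c * (∑ i, ‖Y t i - (n : ℝ)⁻¹ • ∑ j, Y t j‖ ^ 2) + C := by
  rw [sum_sum_ite_ne_eq_sum_offDiag] at hpsum
  have pairs_nonempty : (univ : Finset (Fin n)).offDiag.Nonempty :=
    nonempty_of_sum_ne_zero (hpsum.trans_ne one_ne_zero)
  obtain ⟨⟨a, b⟩, hab, hmin⟩ := exists_min_image _ (fun e => p e.1 e.2) pairs_nonempty
  have hpab : 0 < p a b := hppos a b (mem_offDiag.1 hab).2.2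
  have hn : (0 : ℝ) < n := Nat.cast_pos.2 a.pos
  set N := (#(univ : Finset (Fin n)).offDiag : ℝ) with hN
  have : 0 < N := Nat.cast_pos.2 pairs_nonempty.card_pos
  refine ⟨4 * p a b * (2 * n) / (1 + N / 2), 4 * N * Real.exp (-1), by positivity, by positivity,
    fun Y hflow t ht hdep => ?_⟩
  have bound := sum_offDiag_qfun_exp_neg_sub_mul_le hpsum hpab.le
    (fun i j hij => hmin (i, j) (by simpa using hij)) hdep
  rw [sum_offDiag_norm_sub_sq, Fintype.card_fin, ← hN] at bound
  rw [hflow.derivWithin_sum_norm_sq_exp_neg hsymm ht]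
  refine (mul_le_mul_of_nonneg_left bound zero_le_four).trans_eq ?_
  ring

end GradientFlow

/-- **Inequality (3.7) (SNE case).** For `β(x) = e^{-x}` and a solution `Y(t)` of the
gradient flow with center of mass at the origin, setting `S(t) = Σ_i |y_i(t)|²`, there exist
constants `c, C, C' > 0` such that whenever `S(t) ≥ C'` one has `dS/dt ≤ -c S(t) + C`. -/
theorem dSdt_bound_sne
    (s n : ℕ) (hs : 1 ≤ s) (hn : s + 1 < n)
    (p : Fin n → Fin n → ℝ)
    (hsymm : ∀ i j, p i j = p j i)
    (hppos : ∀ i j, i ≠ j → 0 < p i j)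
    (hpsum : (∑ i, ∑ j, if i ≠ j then p i j else (0 : ℝ)) = 1)
    (β : ℝ → ℝ) (hβ : β = fun x => Real.exp (-x))
    (Y : ℝ → Fin n → EuclideanSpace ℝ (Fin s))
    (hflow : IsGradFlow β p Y)
    (hcm : ∀ t : ℝ, 0 ≤ t → ∑ i, Y t i = 0) :
    ∃ c C C' : ℝ, 0 < c ∧ 0 < C ∧ 0 < C' ∧
      ∀ t : ℝ, 0 ≤ t → C' ≤ ∑ i, ‖Y t i‖ ^ 2 →
        derivWithin (fun u => ∑ i, ‖Y u i‖ ^ 2) (Set.Ici 0) t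
          ≤ -c * (∑ i, ‖Y t i‖ ^ 2) + C := by
  subst hβ
  obtain ⟨c, C, hc, hC, bound⟩ :=
    dSdt_bound_sne_general (E := EuclideanSpace ℝ (Fin s)) hsymm hppos hpsum
  exact ⟨c, C, 1, hc, hC, one_pos, fun t ht _ => by
    simpa [hcm t ht] using bound Y hflow t ht
      (not_affineIndependent_of_finrank_add_one_lt_card (by simpa using hn) _)⟩
end

section
/- Let n = 3, s = 1, β(x) = (1+x)^{-1}, and p_{ij} = 1/6 for all i ≠ j. Let Y(t) = (y_1(t), y_2(t), y_3(t)) be the solution of the gradient flow of the relative entropy with initial data y_1(0) = 1, y_2(0) = 0, y_3(0) = −1. Then there exists a constant C > 0 such that diam Y(t) ≤ C t^{−1/2} for all t ≥ 1; in particular diam Y(t) → 0 as t → ∞. -/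
open Filter Topology

/-!
The point reflection in the initial position of the middle point, combined with the exchange of the
two outer points, maps solutions to solutions. As the vector field is locally Lipschitz, solutions
are unique, so the equal spacing of the initial data persists and the flow reduces to a scalar
equation: the squared distance `v` from an outer point to the middle one satisfies
`v' = -4 v² / ((1 + 3v)(1 + v)(1 + 4v))`. Along the flow `v` decreases, hence `v' ≤ -k v²` with a
constant `k > 0`, and integrating `(1 / v)' ≥ k` gives `v ≤ 1 / (k t)`.
-/

open Set

section Calculus

theorem eqOn_Ici_of_hasDerivWithinAt_of_locallyLipschitz
    {F : Type*} [NormedAddCommGroup F] [NormedSpace ℝ F]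
    {V : F → F} {f g : ℝ → F} {a : ℝ} (hV : LocallyLipschitz V)
    (hf : ∀ t ∈ Ici a, HasDerivWithinAt f (V (f t)) (Ici a) t)
    (hg : ∀ t ∈ Ici a, HasDerivWithinAt g (V (g t)) (Ici a) t) (ha : f a = g a) :
    EqOn f g (Ici a) := by
  intro b hb
  have hf_cont : ContinuousOn f (Icc a b) :=
    fun t ht ↦ (hf t ht.1).continuousWithinAt.mono Icc_subset_Ici_self
  have hg_cont : ContinuousOn g (Icc a b) :=
    fun t ht ↦ (hg t ht.1).continuousWithinAt.mono Icc_subset_Ici_self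
  have h_compact : IsCompact (f '' Icc a b ∪ g '' Icc a b) :=
    (isCompact_Icc.image_of_continuousOn hf_cont).union
      (isCompact_Icc.image_of_continuousOn hg_cont)
  obtain ⟨K, hK⟩ := hV.locallyLipschitzOn.exists_lipschitzOnWith_of_compact h_compact
  exact ODE_solution_unique_of_mem_Icc_right (v := fun _ ↦ V) (s := fun _ ↦ _) (fun _ _ ↦ hK)
    hf_cont (fun t ht ↦ (hf t ht.1).mono (Ici_subset_Ici.2 ht.1))
    (fun t ht ↦ .inl (mem_image_of_mem f (Ico_subset_Icc_self ht)))
    hg_cont (fun t ht ↦ (hg t ht.1).mono (Ici_subset_Ici.2 ht.1))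
    (fun t ht ↦ .inr (mem_image_of_mem g (Ico_subset_Icc_self ht))) ha ⟨hb, le_rfl⟩

theorem antitoneOn_of_hasDerivWithinAt_self_nonpos {D : Set ℝ} (hD : Convex ℝ D) {f f' : ℝ → ℝ}
    (hf : ∀ t ∈ D, HasDerivWithinAt f (f' t) D t) (hf' : ∀ t ∈ D, f' t ≤ 0) : AntitoneOn f D :=
  antitoneOn_of_hasDerivWithinAt_nonpos hD (fun t ht ↦ (hf t ht).continuousWithinAt)
    (fun t ht ↦ (hf t (interior_subset ht)).mono interior_subset)
    (fun t ht ↦ hf' t (interior_subset ht))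

theorem le_inv_of_hasDerivWithinAt_le_neg_mul_sq {v v' : ℝ → ℝ} {a k t : ℝ} (hk : 0 < k)
    (hv : ∀ s ∈ Ici a, HasDerivWithinAt v (v' s) (Ici a) s)
    (hv' : ∀ s ∈ Ici a, v' s ≤ -k * v s ^ 2) (ht : a < t) : v t ≤ (k * (t - a))⁻¹ := by
  have h_len : 0 < k * (t - a) := mul_pos hk (sub_pos.2 ht)
  rcases le_or_gt (v t) 0 with hvt | hvt
  · exact hvt.trans (inv_nonneg.2 h_len.le)
  have hv_anti : AntitoneOn v (Ici a) :=
    antitoneOn_of_hasDerivWithinAt_self_nonpos (convex_Ici a) hv fun s hs ↦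
      (hv' s hs).trans (by nlinarith [sq_nonneg (v s)])
  have hv_pos : ∀ s ∈ Icc a t, 0 < v s :=
    fun s hs ↦ hvt.trans_le (hv_anti hs.1 ht.le hs.2)
  have h_anti : AntitoneOn (fun s ↦ k * s - (v s)⁻¹) (Icc a t) := by
    refine antitoneOn_of_hasDerivWithinAt_self_nonpos (convex_Icc a t)
      (f' := fun s ↦ k * 1 - -v' s / v s ^ 2) (fun s hs ↦ ?_) (fun s hs ↦ ?_)
    · exact ((hasDerivWithinAt_id s _).const_mul k).sub
        (((hv s hs.1).mono Icc_subset_Ici_self).inv (hv_pos s hs).ne')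
    · rw [mul_one, sub_nonpos, le_div_iff₀ (pow_pos (hv_pos s hs) 2)]
      linarith [hv' s hs.1]
  have h_ends : k * t - (v t)⁻¹ ≤ k * a - (v a)⁻¹ :=
    h_anti (left_mem_Icc.2 ht.le) (right_mem_Icc.2 ht.le) ht.le
  have hva : 0 < (v a)⁻¹ := inv_pos.2 (hv_pos a (left_mem_Icc.2 ht.le))
  exact (le_inv_comm₀ h_len hvt).1 (by linarith)

end Calculus

theorem perm_invariant_of_forall_ne_eq {ι R : Type*} {p : ι → ι → R} {c : R}
    (hp : ∀ i j, i ≠ j → p i j = c) (σ : Equiv.Perm ι) (i j : ι) (hij : i ≠ j) :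
    p (σ i) (σ j) = p i j := by
  rw [hp i j hij, hp _ _ (σ.injective.ne hij)]

section GradientFlow

variable {E E' : Type*} [NormedAddCommGroup E] [NormedAddCommGroup E'] {β : ℝ → ℝ} {n : ℕ}

theorem contDiffOn_lbd {m : WithTop ℕ∞} (hβ : ContDiffOn ℝ (m + 1) β (Ici 0))
    (hβ_pos : ∀ x, 0 ≤ x → 0 < β x) : ContDiffOn ℝ m (lbd β) (Ici 0) :=
  (hβ.log fun x hx ↦ (hβ_pos x hx).ne').derivWithin (uniqueDiffOn_Ici 0) le_rfl

theorem pairZ_pos (hβ : ∀ x, 0 ≤ x → 0 < β x) {i j : Fin n} (hij : i ≠ j) (Y : Fin n → E) :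
    0 < pairZ β Y := by
  have h_nonneg (k l : Fin n) : 0 ≤ if k ≠ l then β (‖Y k - Y l‖ ^ 2) else 0 := by
    split_ifs
    exacts [(hβ _ (sq_nonneg _)).le, le_rfl]
  refine Finset.sum_pos' (fun k _ ↦ Finset.sum_nonneg fun l _ ↦ h_nonneg k l)
    ⟨i, Finset.mem_univ i, Finset.sum_pos' (fun l _ ↦ h_nonneg i l) ⟨j, Finset.mem_univ j, ?_⟩⟩
  rw [if_pos hij]
  exact hβ _ (sq_nonneg _)

theorem qfun_comp_perm (β : ℝ → ℝ) (Y : Fin n → E) (σ : Equiv.Perm (Fin n)) (i j : Fin n) :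
    qfun β (fun k ↦ Y (σ k)) i j = qfun β Y (σ i) (σ j) := by
  have hZ : pairZ β (fun k ↦ Y (σ k)) = pairZ β Y := by
    refine Fintype.sum_equiv σ _ _ fun k ↦ Fintype.sum_equiv σ _ _ fun l ↦ ?_
    simp only [ne_eq, σ.injective.eq_iff]
  rw [qfun, qfun, hZ]

theorem diamY_le_of_norm_sub_le {Y : Fin n → E} {c : E} {r : ℝ} (hr : 0 ≤ r)
    (hY : ∀ i, ‖Y i - c‖ ≤ r) : diamY Y ≤ 2 * r := by
  have h_subset : range Y ⊆ Metric.closedBall c r :=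
    range_subset_iff.2 fun i ↦ mem_closedBall_iff_norm.2 (hY i)
  exact (Metric.diam_mono h_subset Metric.isBounded_closedBall).trans (Metric.diam_closedBall hr)

section NormedSpace

variable [NormedSpace ℝ E] [NormedSpace ℝ E'] {p : Fin n → Fin n → ℝ} {Y : ℝ → Fin n → E}

theorem norm_affineIsometry_sub (f : E →ᵃⁱ[ℝ] E') (x y : E) : ‖f x - f y‖ = ‖x - y‖ := by
  rw [← dist_eq_norm, f.dist_map, dist_eq_norm]

theorem qfun_affineIsometry_comp (β : ℝ → ℝ) (f : E →ᵃⁱ[ℝ] E') (Y : Fin n → E) (i j : Fin n) :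
    qfun β (fun k ↦ f (Y k)) i j = qfun β Y i j := by
  simp only [qfun, pairZ, norm_affineIsometry_sub]

/-- The vector field on configurations whose integral curves on `[0, ∞)` are the solutions of the
gradient flow, see `IsGradFlow.hasDerivWithinAt`. -/
noncomputable def gradFlowField (β : ℝ → ℝ) (p : Fin n → Fin n → ℝ) (Y : Fin n → E) (i : Fin n) :
    E :=
  ∑ j ∈ Finset.univ.filter (· ≠ i),
    (4 * (p i j - qfun β Y i j) * lbd β (‖Y i - Y j‖ ^ 2)) • (Y i - Y j)

theorem IsGradFlow.hasDerivWithinAt (hY : IsGradFlow β p Y) {t : ℝ} (ht : 0 ≤ t) :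
    HasDerivWithinAt Y (gradFlowField β p (Y t)) (Ici 0) t :=
  hasDerivWithinAt_pi.2 fun i ↦ hY i t ht

theorem IsGradFlow.affineIsometry_comp (hY : IsGradFlow β p Y) (f : E →ᵃⁱ[ℝ] E') :
    IsGradFlow β p (fun t i ↦ f (Y t i)) := by
  intro i t ht
  have h_deriv := (f.toContinuousAffineMap.hasFDerivAt (x := Y t i)).comp_hasDerivWithinAt t
    (hY i t ht)
  refine h_deriv.congr_deriv ?_
  rw [map_sum]
  refine Finset.sum_congr rfl fun j _ ↦ ?_
  rw [map_smul, qfun_affineIsometry_comp, norm_affineIsometry_sub]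
  exact congrArg _ (f.toContinuousAffineMap.contLinear_map_vsub (Y t i) (Y t j))

theorem IsGradFlow.comp_perm (hY : IsGradFlow β p Y) (σ : Equiv.Perm (Fin n))
    (hp : ∀ i j, i ≠ j → p (σ i) (σ j) = p i j) : IsGradFlow β p (fun t i ↦ Y t (σ i)) := by
  intro i t ht
  refine (hY (σ i) t ht).congr_deriv (Finset.sum_equiv σ (fun j ↦ ?_) fun j hj ↦ ?_).symm
  · simp only [Finset.mem_filter_univ, ne_eq, σ.injective.eq_iff]
  · rw [qfun_comp_perm, hp i j ((Finset.mem_filter_univ j).1 hj).symm]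

end NormedSpace

section InnerProductSpace

variable [InnerProductSpace ℝ E] {p : Fin n → Fin n → ℝ}

theorem contDiff_gradFlowField {m : WithTop ℕ∞} (hβ : ContDiffOn ℝ (m + 1) β (Ici 0))
    (hβ_pos : ∀ x, 0 ≤ x → 0 < β x) :
    ContDiff ℝ m (gradFlowField β p : (Fin n → E) → Fin n → E) := by
  have h_sub (i j : Fin n) : ContDiff ℝ m fun Y : Fin n → E ↦ Y i - Y j :=
    (contDiff_apply ℝ E i).sub (contDiff_apply ℝ E j)
  have h_comp {g : ℝ → ℝ} (hg : ContDiffOn ℝ m g (Ici 0)) (i j : Fin n) :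
      ContDiff ℝ m fun Y : Fin n → E ↦ g (‖Y i - Y j‖ ^ 2) :=
    hg.comp_contDiff ((h_sub i j).norm_sq ℝ) fun Y ↦ mem_Ici.2 (sq_nonneg _)
  have hβ_comp := h_comp (hβ.of_le le_self_add)
  have hZ : ContDiff ℝ m (pairZ β : (Fin n → E) → ℝ) := by
    refine ContDiff.sum fun k _ ↦ ContDiff.sum fun l _ ↦ ?_
    split_ifs
    exacts [hβ_comp k l, contDiff_const]
  refine contDiff_pi.2 fun i ↦ ContDiff.sum fun j hj ↦ ?_
  have hq : ContDiff ℝ m fun Y : Fin n → E ↦ qfun β Y i j :=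
    (hβ_comp i j).div hZ fun Y ↦ (pairZ_pos hβ_pos ((Finset.mem_filter_univ j).1 hj).symm Y).ne'
  exact ((contDiff_const.mul (contDiff_const.sub hq)).mul
    (h_comp (contDiffOn_lbd hβ hβ_pos) i j)).smul (h_sub i j)

theorem IsGradFlow.eqOn_Ici {Y₁ Y₂ : ℝ → Fin n → E} (hβ : ContDiffOn ℝ 2 β (Ici 0))
    (hβ_pos : ∀ x, 0 ≤ x → 0 < β x) (h₁ : IsGradFlow β p Y₁) (h₂ : IsGradFlow β p Y₂)
    (h₀ : Y₁ 0 = Y₂ 0) : EqOn Y₁ Y₂ (Ici 0) := by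
  have h_field : ContDiff ℝ 1 (gradFlowField β p : (Fin n → E) → Fin n → E) :=
    contDiff_gradFlowField (hβ.of_le one_add_one_eq_two.le) hβ_pos
  exact eqOn_Ici_of_hasDerivWithinAt_of_locallyLipschitz h_field.locallyLipschitz
    (fun _ ht ↦ h₁.hasDerivWithinAt ht) (fun _ ht ↦ h₂.hasDerivWithinAt ht) h₀

theorem IsGradFlow.eq_affineIsometry_perm {Y : ℝ → Fin n → E} (hβ : ContDiffOn ℝ 2 β (Ici 0))
    (hβ_pos : ∀ x, 0 ≤ x → 0 < β x) (hY : IsGradFlow β p Y) (f : E →ᵃⁱ[ℝ] E)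
    (σ : Equiv.Perm (Fin n)) (hp : ∀ i j, i ≠ j → p (σ i) (σ j) = p i j)
    (h₀ : ∀ i, Y 0 i = f (Y 0 (σ i))) {t : ℝ} (ht : 0 ≤ t) (i : Fin n) :
    Y t i = f (Y t (σ i)) :=
  congrFun (hY.eqOn_Ici hβ hβ_pos ((hY.comp_perm σ hp).affineIsometry_comp f) (funext h₀) ht) i

end InnerProductSpace

end GradientFlow

section ThreePoints

theorem pairZ_fin_three {E : Type*} [NormedAddCommGroup E] (β : ℝ → ℝ) (Y : Fin 3 → E) :
    pairZ β Y =
      2 * (β (‖Y 0 - Y 1‖ ^ 2) + β (‖Y 1 - Y 2‖ ^ 2) + β (‖Y 0 - Y 2‖ ^ 2)) := by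
  simp only [pairZ, Fin.sum_univ_three, norm_sub_rev (Y 1) (Y 0), norm_sub_rev (Y 2), ne_eq,
    Fin.reduceEq, not_true_eq_false, not_false_eq_true, if_true, if_false]
  ring

variable {E : Type*} [NormedAddCommGroup E] [InnerProductSpace ℝ E] {p : Fin 3 → Fin 3 → ℝ}

theorem IsGradFlow.eq_pointReflection_of_midpoint {β : ℝ → ℝ} {Y : ℝ → Fin 3 → E}
    (hβ : ContDiffOn ℝ 2 β (Ici 0)) (hβ_pos : ∀ x, 0 ≤ x → 0 < β x) (hY : IsGradFlow β p Y)
    (hp : ∀ i j, i ≠ j → p (Equiv.swap 0 2 i) (Equiv.swap 0 2 j) = p i j)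
    (h₀ : Y 0 1 = midpoint ℝ (Y 0 0) (Y 0 2)) {t : ℝ} (ht : 0 ≤ t) (i : Fin 3) :
    Y t i = AffineIsometryEquiv.pointReflection ℝ (Y 0 1) (Y t (Equiv.swap 0 2 i)) := by
  refine hY.eq_affineIsometry_perm hβ hβ_pos
    (AffineIsometryEquiv.pointReflection ℝ (Y 0 1)).toAffineIsometry _ hp (fun j ↦ ?_) ht i
  have h_swap : Equiv.swap (0 : Fin 3) 2 1 = 1 := by decide
  fin_cases j <;> simp [h₀, h_swap]

theorem IsGradFlow.middle_eq_initial {β : ℝ → ℝ} {Y : ℝ → Fin 3 → E}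
    (hβ : ContDiffOn ℝ 2 β (Ici 0)) (hβ_pos : ∀ x, 0 ≤ x → 0 < β x) (hY : IsGradFlow β p Y)
    (hp : ∀ i j, i ≠ j → p (Equiv.swap 0 2 i) (Equiv.swap 0 2 j) = p i j)
    (h₀ : Y 0 1 = midpoint ℝ (Y 0 0) (Y 0 2)) {t : ℝ} (ht : 0 ≤ t) : Y t 1 = Y 0 1 :=
  AffineIsometryEquiv.pointReflection_fixed_iff.1
    (hY.eq_pointReflection_of_midpoint hβ hβ_pos hp h₀ ht 1).symm

theorem IsGradFlow.middle_eq_midpoint {β : ℝ → ℝ} {Y : ℝ → Fin 3 → E}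
    (hβ : ContDiffOn ℝ 2 β (Ici 0)) (hβ_pos : ∀ x, 0 ≤ x → 0 < β x) (hY : IsGradFlow β p Y)
    (hp : ∀ i j, i ≠ j → p (Equiv.swap 0 2 i) (Equiv.swap 0 2 j) = p i j)
    (h₀ : Y 0 1 = midpoint ℝ (Y 0 0) (Y 0 2)) {t : ℝ} (ht : 0 ≤ t) :
    Y t 1 = midpoint ℝ (Y t 0) (Y t 2) := by
  rw [hY.middle_eq_initial hβ hβ_pos hp h₀ ht, eq_comm, midpoint_eq_iff]
  exact (hY.eq_pointReflection_of_midpoint hβ hβ_pos hp h₀ ht 2).symm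

theorem diamY_le_of_midpoint {Y : Fin 3 → E} (hY : Y 1 = midpoint ℝ (Y 0) (Y 2)) :
    diamY Y ≤ 2 * ‖Y 0 - Y 1‖ := by
  refine diamY_le_of_norm_sub_le (c := Y 1) (norm_nonneg _) fun i ↦ ?_
  fin_cases i
  · exact le_rfl
  · simp
  · rw [hY]
    simp [norm_smul, norm_sub_rev]

end ThreePoints

section TSNE

/-- The kernel of t-SNE, i.e. the unnormalized density of Student's t-distribution with one degree
of freedom as a function of the squared distance. -/
noncomputable def tsneKernel (x : ℝ) : ℝ :=
  (1 + x)⁻¹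

theorem tsneKernel_pos {x : ℝ} (hx : 0 ≤ x) : 0 < tsneKernel x :=
  inv_pos.2 (by linarith)

theorem contDiffOn_tsneKernel {m : WithTop ℕ∞} : ContDiffOn ℝ m tsneKernel (Ici 0) :=
  (contDiffOn_const.add contDiffOn_id).inv fun _ hx ↦ (add_pos_of_pos_of_nonneg one_pos hx).ne'

theorem lbd_tsneKernel {x : ℝ} (hx : 0 ≤ x) : lbd tsneKernel x = -tsneKernel x := by
  have h_log : (fun y ↦ Real.log (tsneKernel y)) = fun y ↦ -Real.log (1 + y) :=
    funext fun y ↦ Real.log_inv _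
  have h_deriv : HasDerivAt (fun y ↦ -Real.log (1 + y)) (-tsneKernel x) x := by
    refine (((hasDerivAt_id x).const_add 1).log (by positivity)).fun_neg.congr_deriv ?_
    rw [one_div, tsneKernel, id]
  rw [lbd, h_log]
  exact h_deriv.hasDerivWithinAt.derivWithin (uniqueDiffOn_Ici 0 x hx)

/-- The coefficient `k(v)` in the equation `v' = -k(v) v²` satisfied by the squared distance `v`
from an outer point to the middle one, for three equally spaced points under the t-SNE flow. -/
noncomputable def collapseRate (v : ℝ) : ℝ :=
  4 / ((1 + 3 * v) * (1 + v) * (1 + 4 * v))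

theorem collapseRate_pos {v : ℝ} (hv : 0 ≤ v) : 0 < collapseRate v := by
  unfold collapseRate
  positivity

theorem antitoneOn_collapseRate : AntitoneOn collapseRate (Ici 0) := by
  intro v hv w hw hvw
  rw [mem_Ici] at hv hw
  unfold collapseRate
  gcongr

variable {E : Type*} [NormedAddCommGroup E] [InnerProductSpace ℝ E] {p : Fin 3 → Fin 3 → ℝ}

theorem gradFlowField_tsneKernel_apply_zero (hp : ∀ i j, i ≠ j → p i j = 1 / 6) {Y : Fin 3 → E}
    (hY : Y 1 = midpoint ℝ (Y 0) (Y 2)) :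
    gradFlowField tsneKernel p Y 0 =
      -(collapseRate (‖Y 0 - Y 1‖ ^ 2) * ‖Y 0 - Y 1‖ ^ 2 / 2) • (Y 0 - Y 1) := by
  have h₁₂ : Y 1 - Y 2 = Y 0 - Y 1 := by rw [hY]; simp
  have h₀₂ : Y 0 - Y 2 = (2 : ℝ) • (Y 0 - Y 1) := by
    rw [two_smul]
    nth_rw 2 [← h₁₂]
    abel
  have h_filter : Finset.univ.filter (· ≠ (0 : Fin 3)) = {1, 2} := by decide
  generalize hx : Y 0 - Y 1 = x at *
  have h_norm : ‖Y 0 - Y 2‖ ^ 2 = 4 * ‖x‖ ^ 2 := by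
    rw [h₀₂, norm_smul, mul_pow, Real.norm_two]
    norm_num
  have hZ : pairZ tsneKernel Y =
      2 * (2 * tsneKernel (‖x‖ ^ 2) + tsneKernel (4 * ‖x‖ ^ 2)) := by
    rw [pairZ_fin_three, hx, h₁₂, h_norm]
    ring
  rw [gradFlowField, h_filter, Finset.sum_pair (by decide), qfun, qfun, hZ, hp 0 1 (by decide),
    hp 0 2 (by decide), h_norm, hx, lbd_tsneKernel (by positivity), lbd_tsneKernel (by positivity),
    h₀₂, smul_smul, ← add_smul]
  congr 1
  unfold tsneKernel collapseRate
  field_simp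
  ring

variable {Y : ℝ → Fin 3 → E}

theorem IsGradFlow.hasDerivWithinAt_norm_sub_sq (hY : IsGradFlow tsneKernel p Y)
    (hp : ∀ i j, i ≠ j → p i j = 1 / 6) (h₀ : Y 0 1 = midpoint ℝ (Y 0 0) (Y 0 2))
    {t : ℝ} (ht : 0 ≤ t) :
    HasDerivWithinAt (fun s ↦ ‖Y s 0 - Y s 1‖ ^ 2)
      (-collapseRate (‖Y t 0 - Y t 1‖ ^ 2) * (‖Y t 0 - Y t 1‖ ^ 2) ^ 2) (Ici 0) t := by
  have h_mid {s : ℝ} (hs : 0 ≤ s) : Y s 1 = Y 0 1 :=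
    hY.middle_eq_initial contDiffOn_tsneKernel (fun _ ↦ tsneKernel_pos)
      (perm_invariant_of_forall_ne_eq hp _) h₀ hs
  have h_field := gradFlowField_tsneKernel_apply_zero hp
    (hY.middle_eq_midpoint contDiffOn_tsneKernel (fun _ ↦ tsneKernel_pos)
      (perm_invariant_of_forall_ne_eq hp _) h₀ ht)
  have h_deriv := ((hasDerivWithinAt_pi.1 (hY.hasDerivWithinAt ht) 0).sub_const (Y 0 1)).norm_sq
  rw [h_field, ← h_mid ht, real_inner_smul_right, real_inner_self_eq_norm_sq] at h_deriv
  refine (h_deriv.congr (fun s hs ↦ ?_) rfl).congr_deriv (by ring)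
  rw [h_mid hs, h_mid ht]

theorem IsGradFlow.norm_sub_sq_le (hY : IsGradFlow tsneKernel p Y)
    (hp : ∀ i j, i ≠ j → p i j = 1 / 6) (h₀ : Y 0 1 = midpoint ℝ (Y 0 0) (Y 0 2))
    {t : ℝ} (ht : 0 < t) :
    ‖Y t 0 - Y t 1‖ ^ 2 ≤ (collapseRate (‖Y 0 0 - Y 0 1‖ ^ 2) * t)⁻¹ := by
  have h_deriv (s : ℝ) (hs : s ∈ Ici 0) := hY.hasDerivWithinAt_norm_sub_sq hp h₀ hs
  have h_anti : AntitoneOn (fun s ↦ ‖Y s 0 - Y s 1‖ ^ 2) (Ici 0) :=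
    antitoneOn_of_hasDerivWithinAt_self_nonpos (convex_Ici 0) h_deriv fun s _ ↦
      mul_nonpos_of_nonpos_of_nonneg (neg_nonpos.2 (collapseRate_pos (sq_nonneg _)).le)
        (sq_nonneg _)
  have h_rate {s : ℝ} (hs : s ∈ Ici 0) :
      collapseRate (‖Y 0 0 - Y 0 1‖ ^ 2) ≤ collapseRate (‖Y s 0 - Y s 1‖ ^ 2) :=
    antitoneOn_collapseRate (mem_Ici.2 (sq_nonneg _)) (mem_Ici.2 (sq_nonneg _))
      (h_anti self_mem_Ici hs hs)
  have h_le := le_inv_of_hasDerivWithinAt_le_neg_mul_sq (collapseRate_pos (sq_nonneg _)) h_deriv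
    (fun s hs ↦ mul_le_mul_of_nonneg_right (neg_le_neg (h_rate hs)) (sq_nonneg _)) ht
  rwa [sub_zero] at h_le

theorem collapse_example_tsne_general (hp : ∀ i j, i ≠ j → p i j = 1 / 6)
    (hY : IsGradFlow tsneKernel p Y) (h₀ : Y 0 1 = midpoint ℝ (Y 0 0) (Y 0 2)) :
    (∃ C : ℝ, 0 < C ∧ ∀ t : ℝ, 0 < t → diamY (Y t) ≤ C * t ^ (-(1 : ℝ) / 2)) ∧
      Tendsto (fun t ↦ diamY (Y t)) atTop (𝓝 0) := by
  set k := collapseRate (‖Y 0 0 - Y 0 1‖ ^ 2)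
  have hk : 0 < k := collapseRate_pos (sq_nonneg _)
  have h_le {t : ℝ} (ht : 0 < t) : diamY (Y t) ≤ 2 * √k⁻¹ * t ^ (-(1 : ℝ) / 2) :=
    calc diamY (Y t) ≤ 2 * ‖Y t 0 - Y t 1‖ :=
          diamY_le_of_midpoint (hY.middle_eq_midpoint contDiffOn_tsneKernel
            (fun _ ↦ tsneKernel_pos) (perm_invariant_of_forall_ne_eq hp _) h₀ ht.le)
      _ ≤ 2 * √((k * t)⁻¹) := by gcongr; exact Real.le_sqrt_of_sq_le (hY.norm_sub_sq_le hp h₀ ht)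
      _ = 2 * √k⁻¹ * t ^ (-(1 : ℝ) / 2) := by
          rw [mul_inv, Real.sqrt_mul (inv_nonneg.2 hk.le), Real.sqrt_inv t, Real.sqrt_eq_rpow t,
            ← Real.rpow_neg ht.le, neg_div, mul_assoc]
  have h_rpow : Tendsto (fun t : ℝ ↦ 2 * √k⁻¹ * t ^ (-(1 : ℝ) / 2)) atTop (𝓝 0) := by
    simpa [neg_div] using (tendsto_rpow_neg_atTop one_half_pos).const_mul (2 * √k⁻¹)
  exact ⟨⟨2 * √k⁻¹, by positivity, fun t ↦ h_le⟩, squeeze_zero' (.of_forall fun _ ↦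
    Metric.diam_nonneg) ((eventually_gt_atTop 0).mono fun t ↦ h_le) h_rpow⟩

end TSNE

/-- **Example 4.1 (t-SNE case).** For `n = 3` points in `ℝ`, `β(x) = (1+x)⁻¹`, uniform
probabilities `p_{ij} = 1/6`, and initial data `(1, 0, -1)`, the solution of the gradient
flow satisfies `diam Y(t) ≤ C t^{-1/2}` for `t ≥ 1`; in particular `diam Y(t) → 0`. -/
theorem collapse_example_tsne
    (β : ℝ → ℝ) (hβ : β = fun x => (1 + x)⁻¹)
    (p : Fin 3 → Fin 3 → ℝ) (hp : ∀ i j, i ≠ j → p i j = 1 / 6)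
    (Y : ℝ → Fin 3 → ℝ)
    (hflow : IsGradFlow β p Y)
    (hY0 : Y 0 = ![1, 0, -1]) :
    (∃ C : ℝ, 0 < C ∧ ∀ t : ℝ, 1 ≤ t → diamY (Y t) ≤ C * t ^ (-(1 : ℝ) / 2)) ∧
      Tendsto (fun t => diamY (Y t)) atTop (𝓝 0) := by
  obtain ⟨⟨C, hC, h_le⟩, h_tendsto⟩ :=
    collapse_example_tsne_general hp (hβ ▸ hflow) (by simp [hY0, midpoint_eq_smul_add])
  exact ⟨⟨C, hC, fun t ht ↦ h_le t (one_pos.trans_le ht)⟩, h_tendsto⟩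
end
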